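/- arXiv:2310.11024 — 2 statements merged into one kernel-verified Lean document; each statement's English description precedes it below -/
import Mathlib

section
/- Blow down preserves admissibility: if (v₁, …, v_k) is an admissible multi-fan with k ≥ 4 and three cyclically consecutive vectors satisfy v_{i+1} = v_i + v_{i+2}, then the cyclic sequence (v₁, …, v_i, v_{i+2}, …, v_k) obtained by deleting v_{i+1} is again an admissible multi-fan. -/
/-!
Deleting `v_j` only affects the conditions at the windows that contain the new neighbouring pair
`p = v_{j-1}`, `q = v_{j+1}`, where `v_j = p + q`. Since `det (p, p + q) = det (p, q)`, the pair
`(p, q)` is again a basis; and the relations `p + q = -a p - u` and `w = -b q - (p + q)` become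
`q = -(a + 1) p - u` and `w = -(b + 1) q - p`, with `u = v_{j-2}` and `w = v_{j+2}`.
So the integers `a_i` at `p` and `q` go up by one and all the others are unchanged.

The index bookkeeping is done in `cyc_eraseIdx`: read from position `j` on, the shortened list of
length `n = k - 1` is `v_{j+1}, v_{j+2}, …, v_{j+n}`, and `j + n ≡ j - 1` modulo `k`. By periodicity
(`cyc_add_mul`) it is enough to check the windows starting at `j + m` with `0 ≤ m < n`.
-/


/-- Determinant of two vectors in `ℤ × ℤ`. -/
def det2 (v w : ℤ × ℤ) : ℤ := v.1 * w.2 - v.2 * w.1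

/-- `v` and `w` form a basis of `ℤ²` iff their determinant is `1` or `-1`. -/
def IsBasisZ2 (v w : ℤ × ℤ) : Prop := det2 v w = 1 ∨ det2 v w = -1

/-- Euclidean norm of a vector in `ℤ² ⊂ ℝ²`. -/
noncomputable def znorm (v : ℤ × ℤ) : ℝ := Real.sqrt ((v.1 : ℝ) ^ 2 + (v.2 : ℝ) ^ 2)

/-- Cyclic indexing (indices modulo the length) in a list of vectors in `ℤ²`. -/
def cyc (l : List (ℤ × ℤ)) (i : ℤ) : ℤ × ℤ := l.getD (i % (l.length : ℤ)).toNat (0, 0)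

/-- A cyclic sequence `(v₁, …, v_k)` of vectors in `ℤ²` is an *admissible multi-fan* if
for every `i`, `v_{i-1}` and `v_i` form a basis of `ℤ²` and
`v_{i+1} = -a_i • v_i - v_{i-1}` for some integer `a_i`. -/
def AdmissibleMultiFan (l : List (ℤ × ℤ)) : Prop :=
  ∀ i : ℤ, IsBasisZ2 (cyc l i) (cyc l (i + 1)) ∧
    ∃ a : ℤ, cyc l (i + 2) = -(a • cyc l (i + 1)) - cyc l i

/-- Blow up of a multi-fan at index `i`: insert `v_i + v_{i+1}` between `v_i` and `v_{i+1}`. -/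
def BlowUp (l l' : List (ℤ × ℤ)) : Prop :=
  ∃ i : ℕ, i < l.length ∧
    l' = l.take (i + 1) ++ (cyc l i + cyc l ((i : ℤ) + 1)) :: l.drop (i + 1)

/-- Blow down of a multi-fan at index `i`: when `v_i = v_{i-1} + v_{i+1}` (cyclically),
delete `v_i`. -/
def BlowDown (l l' : List (ℤ × ℤ)) : Prop :=
  ∃ i : ℕ, i < l.length ∧ cyc l i = cyc l ((i : ℤ) - 1) + cyc l ((i : ℤ) + 1) ∧
    l' = l.eraseIdx i

/-- A multi-fan is *minimal* if every vector in it is a unit vector of `ℤ²`. -/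
def MinimalFan (l : List (ℤ × ℤ)) : Prop :=
  ∀ v ∈ l, v = (1, 0) ∨ v = (-1, 0) ∨ v = (0, 1) ∨ v = (0, -1)

theorem cyc_add_mul (l : List (ℤ × ℤ)) (i q : ℤ) :
    cyc l (i + (l.length : ℤ) * q) = cyc l i := by
  simp [cyc]

theorem cyc_add_length (l : List (ℤ × ℤ)) (i : ℤ) :
    cyc l (i + (l.length : ℤ)) = cyc l i := by
  simp [cyc]

theorem cyc_of_lt (l : List (ℤ × ℤ)) (i : ℕ) (hi : i < l.length) : cyc l i = l[i] := by
  have h : ((i : ℤ) % (l.length : ℤ)).toNat = i := by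
    rw [Int.emod_eq_of_lt (by omega) (by omega)]; simp
  simp [cyc, h, hi]

theorem cyc_eraseIdx (l : List (ℤ × ℤ)) (j m : ℕ) (hj : j < l.length) (hm : m + 1 < l.length) :
    cyc (l.eraseIdx j) ((j : ℤ) + m) = cyc l ((j : ℤ) + m + 1) := by
  have hl : (l.eraseIdx j).length = l.length - 1 := List.length_eraseIdx_of_lt hj
  by_cases hc : j + m < l.length - 1
  · have h1 := cyc_of_lt (l.eraseIdx j) (j + m) (by omega)
    have h2 := cyc_of_lt l (j + m + 1) (by omega)
    push_cast at h1 h2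
    rw [h1, h2, List.getElem_eraseIdx_of_ge (by omega) (by omega)]
  · -- The index has wrapped around, past the end of both lists, to a position before `j`.
    have h1 := cyc_of_lt (l.eraseIdx j) (j + m - (l.length - 1)) (by omega)
    have h2 := cyc_of_lt l (j + m - (l.length - 1)) (by omega)
    rw [← cyc_add_length] at h1 h2
    rw [List.getElem_eraseIdx_of_lt (by omega) (by omega), ← h2] at h1
    convert h1 using 2 <;> omega

/-- Blow down preserves admissibility: if an admissible multi-fan with at least four vectors
has three cyclically consecutive vectors with `v_j = v_{j-1} + v_{j+1}`, then deleting `v_j`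
yields an admissible multi-fan. -/
theorem stmt_5 (l : List (ℤ × ℤ)) (h : AdmissibleMultiFan l) (hlen : 4 ≤ l.length)
    (j : ℕ) (hj : j < l.length)
    (hsum : cyc l j = cyc l ((j : ℤ) - 1) + cyc l ((j : ℤ) + 1)) :
    AdmissibleMultiFan (l.eraseIdx j) := by
  have hl : (l.eraseIdx j).length = l.length - 1 := List.length_eraseIdx_of_lt hj
  obtain ⟨n, hn⟩ : ∃ n, l.length = n + 1 := ⟨l.length - 1, by omega⟩
  have hl' : ((l.eraseIdx j).length : ℤ) = n := by omega
  intro i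
  have hn0 : (n : ℤ) ≠ 0 := by omega
  -- Reduce to a window starting at `j + m` with `0 ≤ m < n`.
  obtain ⟨m, hm⟩ := Int.eq_ofNat_of_zero_le (Int.emod_nonneg (i - j) hn0)
  have hmn : m < n := by
    have := Int.emod_lt_of_pos (i - j) (b := (n : ℤ)) (by omega)
    omega
  have hi : i = (j : ℤ) + m + n * ((i - j) / n) := by
    have := Int.emod_add_mul_ediv (i - j) n
    omega
  have hshift : ∀ c : ℤ, cyc (l.eraseIdx j) (i + c) = cyc (l.eraseIdx j) ((j : ℤ) + m + c) := by
    intro c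
    rw [← cyc_add_mul _ ((j : ℤ) + m + c) ((i - j) / n), hl']
    congr 1
    linarith
  have hV : ∀ t : ℕ, t < n → ∀ a b : ℤ, a = (j : ℤ) + t → b = (j : ℤ) + t + 1 →
      cyc (l.eraseIdx j) a = cyc l b := by
    rintro t ht a b rfl rfl
    exact cyc_eraseIdx l j t hj (by omega)
  have hper : ∀ a b : ℤ, a = b + n → cyc (l.eraseIdx j) a = cyc (l.eraseIdx j) b := by
    rintro a b rfl
    rw [← hl', cyc_add_length]
  have hperl : ∀ a b : ℤ, a = b + n + 1 → cyc l a = cyc l b := by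
    rintro a b rfl
    rw [← cyc_add_length l b, hn]
    push_cast
    congr 1
    ring
  have h0 := hshift 0
  rw [add_zero, add_zero] at h0
  rw [h0, hshift 1, hshift 2]
  rcases (by omega : m + 2 < n ∨ m + 2 = n ∨ m + 1 = n) with hc | hc | hc
  · rw [hV m (by omega) _ ((j : ℤ) + m + 1) rfl rfl,
      hV (m + 1) (by omega) _ ((j : ℤ) + m + 1 + 1) (by push_cast; ring) (by push_cast; ring),
      hV (m + 2) (by omega) _ ((j : ℤ) + m + 1 + 2) (by push_cast; ring) (by push_cast; ring)]
    exact h _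
  · -- The window `(u, p, q) = (v_{j-2}, v_{j-1}, v_{j+1})`.
    rw [hV m (by omega) _ ((j : ℤ) + m + 1) rfl rfl,
      hV (m + 1) (by omega) _ ((j : ℤ) + m + 2) (by push_cast; ring) (by push_cast; ring),
      hper ((j : ℤ) + m + 2) j (by omega),
      hV 0 (by omega) _ ((j : ℤ) + 1) (by simp) (by simp),
      hperl ((j : ℤ) + m + 1) (j - 2) (by omega), hperl ((j : ℤ) + m + 2) (j - 1) (by omega)]
    obtain ⟨hb, a, ha⟩ := h ((j : ℤ) - 2)
    rw [show (j : ℤ) - 2 + 1 = j - 1 by ring] at hb ha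
    rw [show (j : ℤ) - 2 + 2 = j by ring, hsum] at ha
    refine ⟨hb, a + 1, ?_⟩
    rw [add_smul, one_smul]
    linear_combination ha
  · -- The window `(p, q, w) = (v_{j-1}, v_{j+1}, v_{j+2})`.
    rw [hV m (by omega) _ ((j : ℤ) + m + 1) rfl rfl,
      hper ((j : ℤ) + m + 1) j (by omega),
      hper ((j : ℤ) + m + 2) (j + 1) (by omega),
      hV 0 (by omega) _ ((j : ℤ) + 1) (by simp) (by simp),
      hV 1 (by omega) _ ((j : ℤ) + 2) (by simp) (by push_cast; ring),
      hperl ((j : ℤ) + m + 1) (j - 1) (by omega)]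
    obtain ⟨hb, -⟩ := h ((j : ℤ) - 1)
    obtain ⟨-, a, ha⟩ := h (j : ℤ)
    rw [show (j : ℤ) - 1 + 1 = j by ring, hsum] at hb
    rw [hsum] at ha
    constructor
    · have hdet : ∀ p q : ℤ × ℤ, det2 p (p + q) = det2 p q := by
        intro p q
        simp only [det2, Prod.fst_add, Prod.snd_add]
        ring
      rwa [IsBasisZ2, hdet] at hb
    · refine ⟨a + 1, ?_⟩
      rw [ha, add_smul, one_smul]
      abel
end

section
/- Every cyclic sequence of vectors in ℤ² obtained from a minimal admissible multi-fan by a finite sequence of blow ups and blow downs is itself an admissible multi-fan. -/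
/-- Admissibility says that all consecutive determinants equal one common sign. -/
lemma admissible_iff_det (l : List (ℤ × ℤ)) :
    AdmissibleMultiFan l ↔
      ∃ ε : ℤ, (ε = 1 ∨ ε = -1) ∧ ∀ i : ℤ, det2 (cyc l i) (cyc l (i + 1)) = ε := by
  constructor
  · intro h
    refine ⟨det2 (cyc l 0) (cyc l 1), by simpa [IsBasisZ2] using (h 0).1, ?_⟩
    have step : ∀ i : ℤ, det2 (cyc l (i + 1)) (cyc l (i + 1 + 1)) =
        det2 (cyc l i) (cyc l (i + 1)) := by
      intro i
      obtain ⟨a, ha⟩ := (h i).2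
      rw [show i + 1 + 1 = i + 2 by ring, ha]
      simp only [det2, Prod.fst_sub, Prod.snd_sub, Prod.fst_neg, Prod.snd_neg, Prod.smul_fst,
        Prod.smul_snd, smul_eq_mul]
      ring
    intro i
    induction i using Int.induction_on with
    | zero => simp
    | succ n ih => rw [step, ih]
    | pred n ih => rw [← step, sub_add_cancel, ih]
  · rintro ⟨ε, hε, h⟩ i
    refine ⟨by rw [IsBasisZ2, h i]; exact hε, ?_⟩
    have h1 := h i
    have h2 := h (i + 1)
    rw [show i + 1 + 1 = i + 2 by ring] at h2
    generalize cyc l i = v at *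
    generalize cyc l (i + 1) = w at *
    generalize cyc l (i + 2) = u at *
    have hsq : ε * ε = 1 := by rcases hε with rfl | rfl <;> norm_num
    simp only [det2] at h1 h2
    -- pairing `u + v = c • w` with `v` forces `c = ε * det2 v u`
    refine ⟨-(ε * det2 v u), ?_⟩
    ext <;> simp only [det2, Prod.fst_sub, Prod.snd_sub, Prod.fst_neg, Prod.snd_neg,
      Prod.smul_fst, Prod.smul_snd, smul_eq_mul]
    · linear_combination (-(u.1 + v.1)) * hsq - ε * v.1 * h2 - ε * u.1 * h1
    · linear_combination (-(u.2 + v.2)) * hsq - ε * v.2 * h2 - ε * u.2 * h1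

lemma cyc_natCast (l : List (ℤ × ℤ)) (n : ℕ) :
    cyc l n = l.getD (n % l.length) (0, 0) := by
  unfold cyc
  congr 1

lemma cyc_emod (l : List (ℤ × ℤ)) (i : ℤ) :
    cyc l (i % (l.length : ℤ)) = cyc l i := by
  simp [cyc]

lemma cyc_emod_add (l : List (ℤ × ℤ)) (i j : ℤ) :
    cyc l (i % (l.length : ℤ) + j) = cyc l (i + j) := by
  simp [cyc]

/-- Consecutive entries of a nonempty list, read cyclically through `cyc`, are the consecutive
entries of the associated `Cycle`. -/
lemma chain_iff_cyc (r : ℤ × ℤ → ℤ × ℤ → Prop) (l : List (ℤ × ℤ)) (hl : l ≠ []) :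
    Cycle.Chain r (l : Cycle (ℤ × ℤ)) ↔ ∀ i : ℤ, r (cyc l i) (cyc l (i + 1)) := by
  obtain ⟨a, t, rfl⟩ := List.exists_cons_of_ne_nil hl
  rw [Cycle.chain_coe_cons, List.isChain_iff_getElem]
  set l := a :: t with hdef
  have hlen : l.length = t.length + 1 := by simp [hdef]
  have key : ∀ n : ℕ, ∀ h : n < (a :: (t ++ [a])).length, (a :: (t ++ [a]))[n] = cyc l n := by
    intro n h
    rw [cyc_natCast]
    have h' : n < t.length + 2 := by
      simp only [List.length_cons, List.length_append, List.length_nil] at h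
      omega
    rcases Nat.lt_or_ge n (t.length + 1) with hn | hn
    · rw [hlen, Nat.mod_eq_of_lt hn, List.getD_eq_getElem _ _ (by omega)]
      have e : a :: (t ++ [a]) = l ++ [a] := by simp [hdef]
      simp only [e]
      rw [List.getElem_append_left]
    · obtain rfl : n = t.length + 1 := by omega
      simp [hdef]
  constructor
  · intro h i
    have hpos : (0 : ℤ) < l.length := by rw [hlen]; positivity
    have h0 := Int.emod_nonneg i hpos.ne'
    have h1 := Int.emod_lt_of_pos i hpos
    obtain ⟨n, hn⟩ := Int.eq_ofNat_of_zero_le h0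
    have hb : n + 1 < (a :: (t ++ [a])).length := by
      simp only [List.length_cons, List.length_append, List.length_nil]
      omega
    have := h n hb
    rw [key, key] at this
    rw [← cyc_emod l i, ← cyc_emod_add l i 1, hn]
    simpa using this
  · intro h n hn
    rw [key, key]
    simpa using h n

/-- The rotation-invariant form of admissibility: the sign condition along the cycle of `l`. The
empty list has to be excluded, as its `Cycle.Chain` condition is vacuous. -/
lemma admissible_iff_chain (l : List (ℤ × ℤ)) :
    AdmissibleMultiFan l ↔ ∃ ε : ℤ, (ε = 1 ∨ ε = -1) ∧ l ≠ [] ∧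
      Cycle.Chain (fun v w => det2 v w = ε) (l : Cycle (ℤ × ℤ)) := by
  rw [admissible_iff_det]
  refine exists_congr fun ε => and_congr_right fun hε => ?_
  constructor
  · intro h
    have hl : l ≠ [] := by
      rintro rfl
      have := h 0
      simp [cyc, det2] at this
      omega
    exact ⟨hl, (chain_iff_cyc _ l hl).2 h⟩
  · rintro ⟨hl, h⟩
    exact (chain_iff_cyc _ l hl).1 h

lemma cyc_rotate (l : List (ℤ × ℤ)) (hl : l ≠ []) (n : ℕ) (j : ℤ) :
    cyc (l.rotate n) j = cyc l (n + j) := by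
  have hpos : (0 : ℤ) < l.length := by exact_mod_cast List.length_pos_iff.2 hl
  rw [← cyc_emod (l.rotate n) j, add_comm, ← cyc_emod_add l j n]
  simp only [List.length_rotate]
  obtain ⟨m, hm⟩ := Int.eq_ofNat_of_zero_le (Int.emod_nonneg j hpos.ne')
  have h1 := Int.emod_lt_of_pos j hpos
  have hml : m < l.length := by omega
  rw [hm, show ((m : ℤ) + n) = ((m + n : ℕ) : ℤ) by push_cast; rfl, cyc_natCast, cyc_natCast,
    List.length_rotate, Nat.mod_eq_of_lt hml, List.getD_eq_getElem _ _ (by simpa using hml),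
    List.getD_eq_getElem _ _ (Nat.mod_lt _ (by omega)), List.getElem_rotate]

/-- Equal cycles are related by rotation, so admissibility only depends on the cycle. -/
lemma admissible_congr {l m : List (ℤ × ℤ)} (h : l ~r m) :
    AdmissibleMultiFan l ↔ AdmissibleMultiFan m := by
  rw [admissible_iff_chain, admissible_iff_chain, Cycle.coe_eq_coe.2 h,
    Ne, Ne, ← List.length_eq_zero_iff, h.perm.length_eq, List.length_eq_zero_iff]

lemma blowUp_head {x : ℤ × ℤ} {t : List (ℤ × ℤ)} (h : AdmissibleMultiFan (x :: t)) :
    AdmissibleMultiFan (x :: (x + cyc (x :: t) 1) :: t) := by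
  rw [admissible_iff_chain] at h ⊢
  obtain ⟨ε, hε, -, h⟩ := h
  refine ⟨ε, hε, by simp, ?_⟩
  rcases t with _ | ⟨z, t⟩
  · simp [det2, mul_comm] at h
    omega
  · have hz : cyc (x :: z :: t) 1 = z := by
      rw [show (1 : ℤ) = ((1 : ℕ) : ℤ) by rfl, cyc_natCast]
      simp
    rw [hz]
    simp only [Cycle.chain_coe_cons, List.cons_append, List.isChain_cons_cons] at h ⊢
    obtain ⟨h1, h2⟩ := h
    refine ⟨?_, ?_, h2⟩ <;> rw [← h1] <;> simp only [det2, Prod.fst_add, Prod.snd_add] <;> ring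

lemma blowDown_head {z : ℤ × ℤ} {t : List (ℤ × ℤ)} (h : AdmissibleMultiFan (z :: t))
    (hz : z = cyc (z :: t) (-1) + cyc (z :: t) 1) : AdmissibleMultiFan t := by
  rw [admissible_iff_chain] at h ⊢
  obtain ⟨ε, hε, -, h⟩ := h
  refine ⟨ε, hε, ?_⟩
  have hlast : cyc (z :: t) (-1) = cyc (z :: t) (t.length : ℕ) := by
    rw [← cyc_emod, ← cyc_emod (z :: t) (t.length : ℕ)]
    congr 1
    simp only [List.length_cons]
    push_cast
    rw [← Int.add_emod_right]
    congr 1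
    ring
  rw [hlast] at hz
  rcases t with _ | ⟨w, t⟩
  · simp [det2, mul_comm] at h
    omega
  have hw : cyc (z :: w :: t) 1 = w := by
    rw [show (1 : ℤ) = ((1 : ℕ) : ℤ) by rfl, cyc_natCast]
    simp
  rw [hw, cyc_natCast] at hz
  refine ⟨by simp, ?_⟩
  rcases List.eq_nil_or_concat t with rfl | ⟨s, u, rfl⟩
  · -- here `z = w + w` is parallel to `w`
    simp at hz
    simp only [Cycle.chain_coe_cons, List.cons_append, List.isChain_cons_cons] at h
    have h1 := h.1
    rw [hz] at h1
    simp [det2] at h1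
    ring_nf at h1
    omega
  · have hzu : z = u + w := by
      simpa using hz
    simp only [Cycle.chain_coe_cons, List.cons_append, List.isChain_cons_cons] at h ⊢
    obtain ⟨h1, h2⟩ := h
    have huw : det2 u w = ε := by
      rw [← h1, hzu]
      simp only [det2, Prod.fst_add, Prod.snd_add]
      ring
    -- the paths `w, s, u, z` and `w, s, u, w` agree up to `u`
    have e : ∀ y : ℤ × ℤ, w :: (s.concat u ++ [y]) = (w :: s) ++ u :: [y] := by simp
    rw [e] at h2 ⊢
    rw [List.isChain_split] at h2 ⊢
    exact ⟨h2.1, by simpa using huw⟩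

lemma rotate_eq_cons (l : List (ℤ × ℤ)) (i : ℕ) (hi : i < l.length) :
    l.rotate i = cyc l i :: (l.drop (i + 1) ++ l.take i) := by
  rw [List.rotate_eq_drop_append_take hi.le, List.drop_eq_getElem_cons hi, cyc_natCast,
    Nat.mod_eq_of_lt hi, List.getD_eq_getElem _ _ hi, List.cons_append]

lemma BlowUp.admissible {l l' : List (ℤ × ℤ)} (h : BlowUp l l') (hl : AdmissibleMultiFan l) :
    AdmissibleMultiFan l' := by
  obtain ⟨i, hi, rfl⟩ := h
  have hne : l ≠ [] := by rintro rfl; simp at hi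
  have hrot := rotate_eq_cons l i hi
  have hm : AdmissibleMultiFan (l.rotate i) := (admissible_congr ⟨i, rfl⟩).1 hl
  have h1 := cyc_rotate l hne i 1
  rw [hrot] at hm h1
  have hb := blowUp_head hm
  rw [h1] at hb
  refine (admissible_congr ?_).1 hb
  have e : l.take (i + 1) = l.take i ++ [cyc l i] := by
    rw [List.take_succ_eq_append_getElem hi, cyc_natCast, Nat.mod_eq_of_lt hi,
      List.getD_eq_getElem _ _ hi]
  rw [e]
  have := List.isRotated_append
    (l := cyc l i :: (cyc l i + cyc l (i + 1)) :: l.drop (i + 1)) (l' := l.take i)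
  simpa using this

lemma BlowDown.admissible {l l' : List (ℤ × ℤ)} (h : BlowDown l l')
    (hl : AdmissibleMultiFan l) : AdmissibleMultiFan l' := by
  obtain ⟨i, hi, hz, rfl⟩ := h
  have hne : l ≠ [] := by rintro rfl; simp at hi
  have hrot := rotate_eq_cons l i hi
  have hm : AdmissibleMultiFan (l.rotate i) := (admissible_congr ⟨i, rfl⟩).1 hl
  have h1 := cyc_rotate l hne i 1
  have h2 := cyc_rotate l hne i (-1)
  rw [hrot] at hm h1 h2
  have hb := blowDown_head hm (by rw [h1, h2, ← sub_eq_add_neg]; exact hz)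
  refine (admissible_congr ?_).1 hb
  rw [List.eraseIdx_eq_take_drop_succ]
  exact List.isRotated_append

/-- Every cyclic sequence of vectors in `ℤ²` obtained from a minimal admissible multi-fan
by a finite sequence of blow ups and blow downs is itself an admissible multi-fan. -/
theorem stmt_10 (l₀ l : List (ℤ × ℤ)) (h₀ : AdmissibleMultiFan l₀) (hmin : MinimalFan l₀)
    (h : Relation.ReflTransGen (fun a b => BlowUp a b ∨ BlowDown a b) l₀ l) :
    AdmissibleMultiFan l := by
  induction h with
  | refl => exact h₀
  | tail _ hstep ih =>
    rcases hstep with hu | hd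
    · exact hu.admissible ih
    · exact hd.admissible ih
end
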